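/- Let k be a positive integer with gcd(k, 6) = 1, n = 6k, and d = (5^{6k} - 1)/(5^k - 1) + 1. Let β ∈ F_{5^n} satisfy β⁶ + β + 2 = 0, and write [x_0, x_1, x_2, x_3, x_4, x_5] for the element x_0 + x_1β + x_2β² + x_3β³ + x_4β⁴ + x_5β⁵ with x_i ∈ F_{5^k}. Then for every u ∈ F_{5^k} with u ≠ 0, the polynomial a^{-1}x^d is a complete permutation polynomial over F_{5^n} for each of the following a: [u,0,-u,3u,0,-3u], [u,u,0,-2u,2u,0], [u,u,0,-u,u,2u], [u,u,u,u,u,2u], [u,u,2u,-u,0,-u], [u,u,-2u,2u,-u,u], [u,u,-u,0,3u,3u], [u,2u,0,u,3u,u], [u,2u,u,0,2u,2u], [u,2u,u,2u,u,u], [u,2u,2u,-2u,-u,u], [u,2u,-2u,-u,2u,u], [u,-2u,2u,u,-2u,2u], [u,2u,-u,0,0,u], [u,-u,-2u,2u,-u,2u], [0,0,u,u,-2u,0], [0,0,u,3u,-u,-3u], [0,u,u,u,u,0]. -/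

import Mathlib

/-- `vec6 β x₀ x₁ x₂ x₃ x₄ x₅ = x₀ + x₁β + x₂β² + x₃β³ + x₄β⁴ + x₅β⁵`,
the element written `[x₀, x₁, x₂, x₃, x₄, x₅]` in the basis `{1, β, …, β⁵}`. -/
def vec6 {F : Type*} [CommRing F] (β x0 x1 x2 x3 x4 x5 : F) : F :=
  x0 + x1 * β + x2 * β ^ 2 + x3 * β ^ 3 + x4 * β ^ 4 + x5 * β ^ 5

/-!
Let `q = 5 ^ k` and let `ζ` be a primitive seventh root of unity in `𝔽_{q⁶}`. Since `q` generates
`(ℤ/7)ˣ`, the conjugates of `ζ` over `𝔽_q` are all the nontrivial seventh roots of unity. Hence,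
for `a = v (1 - ζ) + w (1 - ζ⁻¹)` with `v, w ∈ 𝔽_q` and for `t ∈ 𝔽_q`,
`t N(t + a) = ∏ η, (t + v + w - (v η + w η⁻¹)) = D₇(t + v + w, v w) - v⁷ - w⁷`,
where `N` is the norm to `𝔽_q`, the product is over all seventh roots of unity `η`, and `D₇` is the
Dickson polynomial, `D₇(y + z, y z) = y⁷ + z⁷`. It permutes `𝔽_q` because `y, z ∈ 𝔽_{q²}` and `7` is
coprime to `q² - 1`. Taking norms shows that `x ↦ x (N(x) + a) = x ^ d + a x` is then
injective on `𝔽_{q⁶}`; the case `a = 0` gives the injectivity of `x ^ d`.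

The eighteen elements of the statement are multiples by `u` of representatives of the `3 · 6` lines
over `𝔽₅` in the three planes `{v (1 - ζ ^ i) + w (1 - ζ ^ (-i))}`, `i = 1, 2, 3`.
-/

open Polynomial Finset

theorem eq_of_pow_eq_pow_of_coprime {G : Type*} [CommGroupWithZero G] {m n : ℕ} (hn : n ≠ 0)
    (hnm : n.Coprime m) {y z : G} (hy : y ^ (m + 1) = y) (hz : z ^ (m + 1) = z)
    (h : y ^ n = z ^ n) : y = z := by
  rcases eq_or_ne z 0 with rfl | hz0
  · simpa [hn] using h
  have hy0 : y ≠ 0 := by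
    rintro rfl
    simp [hn, eq_comm, hz0] at h
  have hym : y ^ m = 1 := mul_right_cancel₀ hy0 (by rw [← pow_succ, hy, one_mul])
  have hzm : z ^ m = 1 := mul_right_cancel₀ hz0 (by rw [← pow_succ, hz, one_mul])
  have hdiv : y / z = 1 := (pow_eq_one_iff_of_coprime hnm).mp
    ⟨by rw [div_pow, h, div_self (pow_ne_zero n hz0)], by rw [div_pow, hym, hzm, div_one]⟩
  exact (div_eq_one_iff_eq hz0).mp hdiv

theorem exists_add_eq_and_mul_eq {Ω : Type*} [Field Ω] [IsAlgClosed Ω] (s p : Ω) :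
    ∃ y z : Ω, y + z = s ∧ y * z = p := by
  obtain ⟨y, hy⟩ := IsAlgClosed.exists_root (X ^ 2 - C s * X + C p : Polynomial Ω) (by
    rw [show (X ^ 2 - C s * X + C p : Polynomial Ω).degree = 2 by compute_degree!]
    norm_num)
  refine ⟨y, s - y, by ring, ?_⟩
  simp only [IsRoot, eval_add, eval_sub, eval_pow, eval_mul, eval_X, eval_C] at hy
  linear_combination -hy

theorem dickson_eval_add {R : Type*} [CommRing R] (y z : R) :
    ∀ n, (dickson 1 (y * z) n).eval (y + z) = y ^ n + z ^ n
  | 0 => by norm_num [dickson_zero]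
  | 1 => by simp
  | n + 2 => by
    rw [dickson_add_two, eval_sub, eval_mul, eval_mul, eval_X, eval_C,
      dickson_eval_add y z (n + 1), dickson_eval_add y z n]
    ring

theorem pow_natCard_sq_eq_self_of_add_of_mul {K Ω : Type*} [Field K] [Finite K] [Field Ω]
    [Algebra K Ω] {s p : K} {y z : Ω} (hs : y + z = algebraMap K Ω s)
    (hp : y * z = algebraMap K Ω p) :
    y ^ Nat.card K ^ 2 = y := by
  have := Fintype.ofFinite K
  let frob := FiniteField.frobeniusAlgHom K Ω
  have hs' : frob y + frob z = y + z := by rw [← map_add, hs, AlgHom.commutes]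
  have hp' : frob y * frob z = y * z := by rw [← map_mul, hp, AlgHom.commutes]
  have hroot : (frob y - y) * (frob y - z) = 0 := by linear_combination frob y * hs' - hp'
  have hfrob : frob (frob y) = y := by
    rcases mul_eq_zero.mp hroot with h | h
    · rw [sub_eq_zero.mp h, sub_eq_zero.mp h]
    · rw [sub_eq_zero.mp h]
      linear_combination hs' - h
  calc y ^ Nat.card K ^ 2 = (y ^ Nat.card K) ^ Nat.card K := by rw [sq, pow_mul]
    _ = frob (frob y) := by
      simp only [frob, FiniteField.frobeniusAlgHom_apply, Nat.card_eq_fintype_card]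
    _ = y := hfrob

theorem dickson_eval_injective {K : Type*} [Field K] [Finite K] {n : ℕ}
    (hn : n.Coprime (Nat.card K ^ 2 - 1)) (α : K) :
    Function.Injective fun x => (dickson 1 α n).eval x := by
  intro x x' hxx'
  let ι := algebraMap K (AlgebraicClosure K)
  obtain ⟨y, z, hyz, hyzα⟩ := exists_add_eq_and_mul_eq (ι x) (ι α)
  obtain ⟨y', z', hyz', hyzα'⟩ := exists_add_eq_and_mul_eq (ι x') (ι α)
  have hcard : 1 < Nat.card K := Finite.one_lt_card
  have hcard_sq : Nat.card K ^ 2 - 1 + 1 = Nat.card K ^ 2 :=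
    Nat.sub_add_cancel (Nat.one_le_pow _ _ (by omega))
  have hn0 : n ≠ 0 := by
    rintro rfl
    rw [Nat.coprime_zero_left] at hn
    nlinarith
  have pow_inj {a b : AlgebraicClosure K} (ha : a ^ Nat.card K ^ 2 = a)
      (hb : b ^ Nat.card K ^ 2 = b) : a ^ n = b ^ n → a = b :=
    eq_of_pow_eq_pow_of_coprime hn0 hn (by rwa [hcard_sq]) (by rwa [hcard_sq])
  have hy := pow_natCard_sq_eq_self_of_add_of_mul hyz hyzα
  have hz := pow_natCard_sq_eq_self_of_add_of_mul (add_comm y z ▸ hyz) (mul_comm y z ▸ hyzα)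
  have hy' := pow_natCard_sq_eq_self_of_add_of_mul hyz' hyzα'
  have hz' := pow_natCard_sq_eq_self_of_add_of_mul (add_comm y' z' ▸ hyz') (mul_comm y' z' ▸ hyzα')
  have hsum : y ^ n + z ^ n = y' ^ n + z' ^ n := by
    rw [← dickson_eval_add, ← dickson_eval_add, hyzα, hyzα', hyz, hyz', ← map_dickson,
      eval_map_apply, eval_map_apply]
    exact congrArg ι hxx'
  have hprod : y ^ n * z ^ n = y' ^ n * z' ^ n := by rw [← mul_pow, ← mul_pow, hyzα, hyzα']
  have hroot : (y ^ n - y' ^ n) * (y ^ n - z' ^ n) = 0 := by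
    linear_combination y ^ n * hsum - hprod
  refine ι.injective ?_
  rw [← hyz, ← hyz']
  rcases mul_eq_zero.mp hroot with h | h
  · rw [pow_inj hy hy' (by linear_combination h), pow_inj hz hz' (by linear_combination hsum - h)]
  · rw [pow_inj hy hz' (by linear_combination h), pow_inj hz hy' (by linear_combination hsum - h),
      add_comm]

theorem prod_nthRootsFinset_inv {F M : Type*} [Field F] [CommMonoid M] {n : ℕ} (f : F → M) :
    ∏ η ∈ nthRootsFinset n (1 : F), f η⁻¹ = ∏ η ∈ nthRootsFinset n (1 : F), f η := by
  rcases n.eq_zero_or_pos with rfl | hn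
  · simp
  · exact prod_nbij' (·⁻¹) (·⁻¹) (by simp [mem_nthRootsFinset hn]) (by simp [mem_nthRootsFinset hn])
      (by simp) (by simp) (by simp)

theorem prod_nthRootsFinset_eq_prod_range {F M : Type*} [Field F] [CommMonoid M] {n : ℕ} {ζ : F}
    (hζ : IsPrimitiveRoot ζ n) (f : F → M) :
    ∏ η ∈ nthRootsFinset n (1 : F), f η = ∏ i ∈ range n, f (ζ ^ i) := by
  classical
  have hval : (nthRootsFinset n (1 : F)).val = nthRoots n 1 := by
    rw [nthRootsFinset_def, Multiset.toFinset_val, hζ.nthRoots_one_nodup.dedup]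
  rw [prod_eq_multiset_prod, hval, hζ.nthRoots_eq (one_pow n), Multiset.map_map]
  simp [prod_eq_multiset_prod]

theorem prod_nthRootsFinset_add_sub_eq_pow_add_pow_sub {F : Type*} [Field F] {n : ℕ} {ζ : F}
    (hn : 0 < n) (hζ : IsPrimitiveRoot ζ n) {y z v w : F} (h : y * z = v * w) :
    ∏ η ∈ nthRootsFinset n (1 : F), (y + z - (v * η + w * η⁻¹)) =
      y ^ n + z ^ n - (v ^ n + w ^ n) := by
  have prod_sub (x c : F) : ∏ η ∈ nthRootsFinset n (1 : F), (x - c * η) = x ^ n - c ^ n := by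
    simp only [hζ.pow_sub_pow_eq_prod_sub_mul x c hn, mul_comm]
  have prod_sub_inv (x c : F) : ∏ η ∈ nthRootsFinset n (1 : F), (x - c * η⁻¹) = x ^ n - c ^ n := by
    rw [prod_nthRootsFinset_inv fun η => x - c * η, prod_sub]
  rcases eq_or_ne y 0 with rfl | hy
  · rcases mul_eq_zero.mp (h.symm.trans (zero_mul z)) with rfl | rfl
    · simp [prod_sub_inv, hn.ne']
    · simp [prod_sub, hn.ne']
  · refine mul_left_cancel₀ (pow_ne_zero n hy) ?_
    calc y ^ n * ∏ η ∈ nthRootsFinset n (1 : F), (y + z - (v * η + w * η⁻¹))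
        = ∏ η ∈ nthRootsFinset n (1 : F), y * (y + z - (v * η + w * η⁻¹)) := by
          rw [prod_mul_distrib, prod_const, hζ.card_nthRootsFinset]
      _ = ∏ η ∈ nthRootsFinset n (1 : F), (y - v * η) * (y - w * η⁻¹) := by
          refine prod_congr rfl fun η hη => ?_
          have hη0 : η ≠ 0 := ne_zero_of_mem_nthRootsFinset one_ne_zero hη
          linear_combination h - v * w * mul_inv_cancel₀ hη0
      _ = (y ^ n - v ^ n) * (y ^ n - w ^ n) := by rw [prod_mul_distrib, prod_sub, prod_sub_inv]
      _ = y ^ n * (y ^ n + z ^ n - (v ^ n + w ^ n)) := by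
          have hpow : y ^ n * z ^ n = v ^ n * w ^ n := by rw [← mul_pow, h, mul_pow]
          linear_combination -hpow

theorem dickson_eval_sub_eq_prod {F : Type*} [Field F] {n : ℕ} {ζ : F} (hn : 0 < n)
    (hζ : IsPrimitiveRoot ζ n) (v w x : F) :
    (dickson 1 (v * w) n).eval x - (v ^ n + w ^ n) =
      ∏ η ∈ nthRootsFinset n (1 : F), (x - (v * η + w * η⁻¹)) := by
  let ι := algebraMap F (AlgebraicClosure F)
  obtain ⟨y, z, hyz, hyzvw⟩ := exists_add_eq_and_mul_eq (ι x) (ι (v * w))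
  have prod_map (g : AlgebraicClosure F → AlgebraicClosure F) :
      ∏ η ∈ nthRootsFinset n (1 : F), g (ι η) = ∏ η ∈ nthRootsFinset n 1, g η := by
    rw [prod_nthRootsFinset_eq_prod_range hζ,
      prod_nthRootsFinset_eq_prod_range (hζ.map_of_injective ι.injective)]
    simp only [map_pow]
  refine ι.injective ?_
  have hprod := prod_nthRootsFinset_add_sub_eq_pow_add_pow_sub hn
    (hζ.map_of_injective ι.injective) (hyzvw.trans (map_mul ι v w))
  rw [map_prod, map_sub, ← eval_map_apply, map_dickson, ← hyz, ← hyzvw, dickson_eval_add, map_add,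
    map_pow, map_pow, ← hprod, ← prod_map, hyz]
  simp only [map_sub, map_add, map_mul, map_inv₀]

theorem prod_range_pow_pow_eq {F M : Type*} [Field F] [CommMonoid M] {n q : ℕ} [NeZero n]
    (hq : orderOf (q : ZMod n) = n.totient) {ζ : F} (hζ : IsPrimitiveRoot ζ n) (f : F → M) :
    ∏ i ∈ range n.totient, f (ζ ^ q ^ i) = ∏ η ∈ primitiveRoots n F, f η := by
  classical
  have hunit : IsUnit (q : ZMod n) := IsOfFinOrder.isUnit <| orderOf_pos_iff.mp <| by
    rw [hq]
    exact Nat.totient_pos.mpr (NeZero.pos n)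
  have hqn : q.Coprime n := (ZMod.isUnit_iff_coprime q n).mp hunit
  have hinj : Set.InjOn (fun i => ζ ^ q ^ i) (range n.totient) := by
    intro i hi j hj (hij : ζ ^ q ^ i = ζ ^ q ^ j)
    have hzmod : (q : ZMod n) ^ i = (q : ZMod n) ^ j := by
      have := (hζ.isOfFinOrder (NeZero.ne n)).pow_eq_pow_iff_modEq.mp hij
      rw [← hζ.eq_orderOf, ← ZMod.natCast_eq_natCast_iff] at this
      exact_mod_cast this
    exact pow_injOn_Iio_orderOf (by simpa [hq] using hi) (by simpa [hq] using hj) hzmod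
  have himage : (range n.totient).image (fun i => ζ ^ q ^ i) = primitiveRoots n F := by
    refine eq_of_subset_of_card_le (image_subset_iff.mpr fun i _ => ?_) ?_
    · exact (mem_primitiveRoots (NeZero.pos n)).mpr (hζ.pow_of_coprime _ (hqn.pow_left i))
    · rw [card_image_of_injOn hinj, card_range, hζ.card_primitiveRoots]
  rw [← himage, prod_image hinj]

theorem coprime_sq_sub_one_of_orderOf_eq {ℓ q : ℕ} (hℓ : ℓ.Prime) (hℓ3 : 3 < ℓ) (hq0 : q ≠ 0)
    (hq : orderOf (q : ZMod ℓ) = ℓ - 1) : ℓ.Coprime (q ^ 2 - 1) := by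
  refine (Nat.Prime.coprime_iff_not_dvd hℓ).mpr fun hdvd => ?_
  have hsq : (q : ZMod ℓ) ^ 2 = 1 := by
    have := (ZMod.natCast_eq_zero_iff (q ^ 2 - 1) ℓ).mpr hdvd
    rwa [Nat.cast_sub (Nat.one_le_pow _ _ (by omega)), Nat.cast_one, sub_eq_zero,
      Nat.cast_pow] at this
  have := Nat.le_of_dvd two_pos (orderOf_dvd_of_pow_eq_one hsq)
  omega

theorem injective_mul_norm_add {K L : Type*} [Field K] [Field L] [Algebra K L]
    [FiniteDimensional K L] {a : L}
    (h : Function.Injective fun t : K => t * Algebra.norm K (algebraMap K L t + a)) :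
    Function.Injective fun x : L => x * (algebraMap K L (Algebra.norm K x) + a) := by
  intro x y (hxy : x * (algebraMap K L (Algebra.norm K x) + a) =
    y * (algebraMap K L (Algebra.norm K y) + a))
  have hnorm : Algebra.norm K x = Algebra.norm K y := h <| by
    simpa only [map_mul] using congrArg (Algebra.norm K) hxy
  rw [← hnorm] at hxy
  rcases mul_eq_mul_right_iff.mp hxy with hxy | hzero
  · exact hxy
  · have hx : Algebra.norm K x = 0 := h (by simp [hzero])
    rw [Algebra.norm_eq_zero_iff.mp hx, Algebra.norm_eq_zero_iff.mp (hnorm.symm.trans hx)]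

section
variable {K L : Type*} [Field K] [Field L] [Finite L] [Algebra K L] {ℓ : ℕ} [Fact ℓ.Prime]
  (hfinrank : Module.finrank K L = ℓ - 1) (hcard : orderOf (Nat.card K : ZMod ℓ) = ℓ - 1)
  {ζ : L} (hζ : IsPrimitiveRoot ζ ℓ)

include hfinrank hcard hζ in
theorem algebraMap_norm_algebraMap_sub_eq_prod (x v w : K) :
    algebraMap K L (Algebra.norm K (algebraMap K L x -
      (algebraMap K L v * ζ + algebraMap K L w * ζ⁻¹))) =
    ∏ η ∈ primitiveRoots ℓ L, (algebraMap K L x -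
      (algebraMap K L v * η + algebraMap K L w * η⁻¹)) := by
  have htotient : ℓ.totient = ℓ - 1 := Nat.totient_prime Fact.out
  have := Finite.of_injective _ (algebraMap K L).injective
  have := Fintype.ofFinite K
  have := NeZero.mk (Fact.out : ℓ.Prime).ne_zero
  rw [FiniteField.algebraMap_norm_eq_prod_pow, hfinrank, ← htotient,
    ← prod_range_pow_pow_eq (hcard.trans htotient.symm) hζ]
  refine prod_congr rfl fun i _ => ?_
  let frob := FiniteField.frobeniusAlgHom K L
  have hfrob (y : L) : (frob ^ i) y = y ^ Nat.card K ^ i := by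
    rw [AlgHom.coe_pow, FiniteField.coe_frobeniusAlgHom, pow_iterate, Nat.card_eq_fintype_card]
  rw [← hfrob, ← hfrob]
  simp only [map_sub, map_add, map_mul, map_inv₀, AlgHom.commutes]

include hfinrank hcard hζ in
theorem sub_mul_norm_eq_dickson_eval_sub (x v w : K) :
    (x - (v + w)) * Algebra.norm K (algebraMap K L x -
      (algebraMap K L v * ζ + algebraMap K L w * ζ⁻¹)) =
    (dickson 1 (v * w) ℓ).eval x - (v ^ ℓ + w ^ ℓ) := by
  classical
  have hℓ : ℓ.Prime := Fact.out
  refine (algebraMap K L).injective ?_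
  have hone : (1 : L) ∉ primitiveRoots ℓ L := fun h =>
    (mem_primitiveRoots hℓ.pos).mp h |>.ne_one hℓ.one_lt rfl
  have hprod := dickson_eval_sub_eq_prod hℓ.pos hζ (algebraMap K L v) (algebraMap K L w)
    (algebraMap K L x)
  rw [nthRootsFinset_eq_of_prime hℓ, union_comm, prod_union (by simpa using hone),
    prod_singleton, ← algebraMap_norm_algebraMap_sub_eq_prod hfinrank hcard hζ, ← map_mul,
    ← map_dickson, eval_map_apply] at hprod
  simpa using hprod.symm

include hfinrank hcard hζ in
theorem injective_mul_norm_add_one_sub (hℓ : 3 < ℓ) (v w : K) :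
    Function.Injective fun t : K => t * Algebra.norm K (algebraMap K L t +
      (algebraMap K L v * (1 - ζ) + algebraMap K L w * (1 - ζ⁻¹))) := by
  have := Finite.of_injective _ (algebraMap K L).injective
  have hcoprime : ℓ.Coprime (Nat.card K ^ 2 - 1) :=
    coprime_sq_sub_one_of_orderOf_eq Fact.out hℓ Nat.card_pos.ne' hcard
  have heq (t : K) : t * Algebra.norm K (algebraMap K L t +
      (algebraMap K L v * (1 - ζ) + algebraMap K L w * (1 - ζ⁻¹))) =
      (dickson 1 (v * w) ℓ).eval (t + (v + w)) - (v ^ ℓ + w ^ ℓ) := by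
    rw [← sub_mul_norm_eq_dickson_eval_sub hfinrank hcard hζ, add_sub_cancel_right]
    congr 2
    simp only [map_add]
    ring
  simp only [heq]
  exact sub_left_injective.comp <|
    (dickson_eval_injective hcoprime (v * w)).comp (add_left_injective (v + w))

omit [Finite L] in
include hcard hζ in
theorem ne_algebraMap_of_isPrimitiveRoot [Finite K] (hℓ : 2 < ℓ) (c : K) :
    ζ ≠ algebraMap K L c := by
  rintro rfl
  have := Fintype.ofFinite K
  have hc : IsPrimitiveRoot c ℓ := hζ.of_map_of_injective (algebraMap K L).injective
  have hdvd : ℓ ∣ Nat.card K - 1 := hc.dvd_of_pow_eq_one _ <| by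
    rw [Nat.card_eq_fintype_card]
    exact FiniteField.pow_card_sub_one_eq_one c (hc.ne_zero (by omega))
  have hone : (Nat.card K : ZMod ℓ) = 1 := by
    have := (ZMod.natCast_eq_zero_iff _ ℓ).mpr hdvd
    rwa [Nat.cast_sub Nat.card_pos, Nat.cast_one, sub_eq_zero] at this
  rw [hone, orderOf_one] at hcard
  omega

include hcard hζ in
theorem mul_one_sub_add_mul_one_sub_ne_zero (hℓ : 2 < ℓ) {v w : K} (hvw : v ≠ 0 ∨ w ≠ 0) :
    algebraMap K L v * (1 - ζ) + algebraMap K L w * (1 - ζ⁻¹) ≠ 0 := by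
  intro hzero
  have := Finite.of_injective _ (algebraMap K L).injective
  have hζ0 : ζ ≠ 0 := hζ.ne_zero (by omega)
  have hfactor : (1 - ζ) * (algebraMap K L v * ζ - algebraMap K L w) = 0 := by
    linear_combination ζ * hzero + algebraMap K L w * mul_inv_cancel₀ hζ0
  have hvζ : algebraMap K L v * ζ = algebraMap K L w := sub_eq_zero.mp <|
    (mul_eq_zero.mp hfactor).resolve_left (sub_ne_zero.mpr (hζ.ne_one (by omega)).symm)
  have hv : v ≠ 0 := by
    rintro rfl
    rw [map_zero, zero_mul, eq_comm, map_eq_zero] at hvζ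
    exact hvw.elim (absurd rfl) (absurd hvζ)
  refine ne_algebraMap_of_isPrimitiveRoot hcard hζ hℓ (w / v) ?_
  rw [map_div₀, ← hvζ, mul_div_cancel_left₀ _ (by simpa using hv)]

end

/-- Complete permutations: the property of self-maps that defines complete permutation polynomials,
when applied to the evaluation map of a polynomial. -/
def IsCompletePermutation {R : Type*} [Add R] (f : R → R) : Prop :=
  Function.Bijective f ∧ Function.Bijective fun x => f x + x

theorem isCompletePermutation_inv_mul_pow {K L : Type*} [Field K] [Field L] [Finite L] [Algebra K L]
    {ℓ : ℕ} [Fact ℓ.Prime] (hℓ : 3 < ℓ)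
    (hfinrank : Module.finrank K L = ℓ - 1) (hcard : orderOf (Nat.card K : ZMod ℓ) = ℓ - 1)
    {ζ : L} (hζ : IsPrimitiveRoot ζ ℓ) {v w : K} (hvw : v ≠ 0 ∨ w ≠ 0) :
    IsCompletePermutation fun x : L =>
      (algebraMap K L v * (1 - ζ) + algebraMap K L w * (1 - ζ⁻¹))⁻¹ *
        x ^ ((Nat.card L - 1) / (Nat.card K - 1) + 1) := by
  set d := (Nat.card L - 1) / (Nat.card K - 1) + 1
  have hinj (v w : K) : Function.Injective fun x : L =>
      x ^ d + (algebraMap K L v * (1 - ζ) + algebraMap K L w * (1 - ζ⁻¹)) * x := by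
    convert! injective_mul_norm_add
      (injective_mul_norm_add_one_sub hfinrank hcard hζ hℓ v w) using 2 with x
    rw [FiniteField.algebraMap_norm_eq_pow]
    ring
  have ha := mul_one_sub_add_mul_one_sub_ne_zero hcard hζ (by omega) hvw
  set a := algebraMap K L v * (1 - ζ) + algebraMap K L w * (1 - ζ⁻¹)
  constructor <;> refine Function.Injective.bijective_of_finite ?_
  · refine (mul_right_injective₀ (inv_ne_zero ha)).comp ?_
    simpa using hinj 0 0
  · convert! (mul_right_injective₀ (inv_ne_zero ha)).comp (hinj v w) using 2 with x
    rw [Function.comp_apply, mul_add, inv_mul_cancel_left₀ ha]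

theorem exists_algebraMap_eq_of_pow_natCard_eq {K L : Type*} [Field K] [Finite K] [Field L]
    [Algebra K L] {x : L} (hx : x ^ Nat.card K = x) : ∃ c : K, algebraMap K L c = x :=
  Polynomial.splits_X_pow_nat_card_sub_X.mem_range_of_isRoot
    (FiniteField.X_pow_card_sub_X_ne_zero K Finite.one_lt_card) (by simp [hx])

theorem exists_algebra_galoisField {p k r : ℕ} [Fact p.Prime] {F : Type*}
    [Field F] [Finite F] (hk : k ≠ 0) (hF : Nat.card F = p ^ (r * k)) :
    ∃ _ : Algebra (GaloisField p k) F, Module.finrank (GaloisField p k) F = r := by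
  have := Fintype.ofFinite F
  have : CharP F p := charP_of_card_eq_prime_pow (f := r * k) (by
    rw [← Nat.card_eq_fintype_card, hF])
  let _ : Algebra (ZMod p) F := ZMod.algebra F p
  have hdvd : Module.finrank (ZMod p) (GaloisField p k) ∣ Module.finrank (ZMod p) F := by
    have := FiniteField.pow_finrank_eq_natCard p F
    rw [GaloisField.finrank p hk,
      Nat.pow_right_injective (Fact.out : p.Prime).two_le (this.trans hF)]
    exact dvd_mul_left k r
  obtain ⟨φ⟩ := FiniteField.nonempty_algHom_of_finrank_dvd hdvd
  let _ : Algebra (GaloisField p k) F := φ.toRingHom.toAlgebra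
  refine ⟨inferInstance, Nat.eq_of_mul_eq_mul_left (Nat.pos_of_ne_zero hk) ?_⟩
  have hpow := Module.natCard_eq_pow_finrank (K := GaloisField p k) (V := F)
  rw [hF, GaloisField.card p k hk, ← pow_mul] at hpow
  rw [← Nat.pow_right_injective (Fact.out : p.Prime).two_le hpow, mul_comm]

theorem isCompletePermutation_of_natCard_eq {p ℓ k : ℕ} [Fact p.Prime] [Fact ℓ.Prime] (hℓ : 3 < ℓ)
    (hp : orderOf (p : ZMod ℓ) = ℓ - 1) (hk : (ℓ - 1).Coprime k) {F : Type*} [Field F] [Finite F]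
    (hF : Nat.card F = p ^ ((ℓ - 1) * k)) {ζ : F} (hζ : IsPrimitiveRoot ζ ℓ) {v w : F}
    (hv : v ^ p ^ k = v) (hw : w ^ p ^ k = w) (hvw : v ≠ 0 ∨ w ≠ 0) :
    IsCompletePermutation fun x : F => (v * (1 - ζ) + w * (1 - ζ⁻¹))⁻¹ *
      x ^ ((p ^ ((ℓ - 1) * k) - 1) / (p ^ k - 1) + 1) := by
  have hk0 : k ≠ 0 := by
    rintro rfl
    rw [Nat.coprime_zero_right] at hk
    omega
  obtain ⟨_, hfinrank⟩ := exists_algebra_galoisField hk0 hF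
  have hcardK : Nat.card (GaloisField p k) = p ^ k := GaloisField.card p k hk0
  obtain ⟨v, rfl⟩ := exists_algebraMap_eq_of_pow_natCard_eq (hcardK ▸ hv)
  obtain ⟨w, rfl⟩ := exists_algebraMap_eq_of_pow_natCard_eq (hcardK ▸ hw)
  have horder : orderOf (Nat.card (GaloisField p k) : ZMod ℓ) = ℓ - 1 := by
    rw [hcardK, Nat.cast_pow, Nat.Coprime.orderOf_pow (hp ▸ hk), hp]
  rw [← hF, ← hcardK]
  exact isCompletePermutation_inv_mul_pow hℓ hfinrank horder hζ (by simpa using hvw)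

/-- The primitive seventh root of unity `β ^ ((5 ^ 6 - 1) / 7)`, in coordinates with respect to the
powers of a root `β` of `X ^ 6 + X + 2` in characteristic `5`. -/
def seventhRoot {F : Type*} [CommRing F] (β : F) : F := vec6 β (-1) 1 1 (-1) 2 (-2)

section
variable {F : Type*} [Field F] [CharP F 5] {β : F} (hβ : β ^ 6 + β + 2 = 0)
include hβ

theorem seventhRoot_pow :
    seventhRoot β ^ 2 = vec6 β (-1) (-2) 1 2 0 2 ∧
    seventhRoot β ^ 3 = vec6 β (-1) 2 (-1) 1 2 1 ∧
    seventhRoot β ^ 4 = vec6 β (-1) 0 2 (-1) 0 1 ∧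
    seventhRoot β ^ 5 = vec6 β (-1) (-2) 0 (-1) 1 0 ∧
    seventhRoot β ^ 6 = vec6 β (-1) 1 2 0 0 (-2) := by
  have h2 : seventhRoot β ^ 2 = vec6 β (-1) (-2) 1 2 0 2 := by
    simp only [vec6, seventhRoot]
    linear_combination (norm := (ring_nf; reduce_mod_char!))
      (1 + 2 * β - 2 * β ^ 2 + 2 * β ^ 3 - β ^ 4) * hβ
  have h3 : seventhRoot β ^ 3 = vec6 β (-1) 2 (-1) 1 2 1 := by
    rw [pow_succ, h2]
    simp only [vec6, seventhRoot]
    linear_combination (norm := (ring_nf; reduce_mod_char!))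
      (1 - β - β ^ 2 - β ^ 3 + β ^ 4) * hβ
  have h4 : seventhRoot β ^ 4 = vec6 β (-1) 0 2 (-1) 0 1 := by
    rw [pow_succ, h3]
    simp only [vec6, seventhRoot]
    linear_combination (norm := (ring_nf; reduce_mod_char!))
      (1 - 2 * β + β ^ 2 - 2 * β ^ 3 - 2 * β ^ 4) * hβ
  have h5 : seventhRoot β ^ 5 = vec6 β (-1) (-2) 0 (-1) 1 0 := by
    rw [pow_succ, h4]
    simp only [vec6, seventhRoot]
    linear_combination (norm := (ring_nf; reduce_mod_char!))
      (1 + β ^ 2 + 2 * β ^ 3 - 2 * β ^ 4) * hβ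
  have h6 : seventhRoot β ^ 6 = vec6 β (-1) 1 2 0 0 (-2) := by
    rw [pow_succ, h5]
    simp only [vec6, seventhRoot]
    linear_combination (norm := (ring_nf; reduce_mod_char!))
      (1 + 2 * β - β ^ 2 - 2 * β ^ 3) * hβ
  exact ⟨h2, h3, h4, h5, h6⟩

theorem isPrimitiveRoot_seventhRoot : IsPrimitiveRoot (seventhRoot β) 7 := by
  have : Fact (Nat.Prime 7) := ⟨by norm_num⟩
  have : NeZero ((7 : ℕ) : F) := ⟨by rw [Ne, CharP.cast_eq_zero_iff F 5]; norm_num⟩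
  obtain ⟨h2, h3, h4, h5, h6⟩ := seventhRoot_pow hβ
  have hsum : ∑ i ∈ range 7, seventhRoot β ^ i = 0 := by
    simp only [sum_range_succ, range_zero, sum_empty, h2, h3, h4, h5, h6, pow_zero, pow_one]
    simp only [seventhRoot, vec6]
    linear_combination (norm := (ring_nf; reduce_mod_char!))
  rw [← isRoot_cyclotomic_iff, cyclotomic_prime, IsRoot, eval_finsetSum]
  simpa using hsum

end

theorem orderOf_five_zmod_seven : orderOf ((5 : ℕ) : ZMod 7) = 6 :=
  (orderOf_eq_iff (by norm_num)).mpr (by decide)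

theorem isCompletePermutation_seventhRoot {k : ℕ} (hk : k.Coprime 6) {F : Type*} [Field F]
    [Finite F] [CharP F 5] (hF : Nat.card F = 5 ^ (6 * k)) {β u : F} (hβ : β ^ 6 + β + 2 = 0)
    (hu : u ^ 5 ^ k = u) (hu0 : u ≠ 0) {i v w : ℕ} (hi0 : 0 < i) (hi7 : i < 7)
    (hvw : ¬(5 ∣ v ∧ 5 ∣ w)) :
    IsCompletePermutation fun x : F =>
      (u * (v * (1 - seventhRoot β ^ i) + w * (1 - seventhRoot β ^ (7 - i))))⁻¹ *
        x ^ ((5 ^ (6 * k) - 1) / (5 ^ k - 1) + 1) := by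
  have : Fact (Nat.Prime 5) := ⟨by norm_num⟩
  have : Fact (Nat.Prime 7) := ⟨by norm_num⟩
  have hζ := isPrimitiveRoot_seventhRoot hβ
  have hinv : seventhRoot β ^ (7 - i) = (seventhRoot β ^ i)⁻¹ := eq_inv_of_mul_eq_one_left <| by
    rw [← pow_add, Nat.sub_add_cancel hi7.le, hζ.pow_eq_one]
  have hfixed (m : ℕ) : (u * m) ^ 5 ^ k = u * m := by
    rw [mul_pow, hu, ← iterateFrobenius_def, map_natCast]
  have hne : u * v ≠ 0 ∨ u * w ≠ 0 := by
    simpa only [Ne, mul_eq_zero, hu0, false_or, CharP.cast_eq_zero_iff F 5, not_and_or] using hvw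
  rw [hinv, mul_add, ← mul_assoc, ← mul_assoc]
  exact isCompletePermutation_of_natCard_eq (ℓ := 7) (by norm_num) orderOf_five_zmod_seven
    hk.symm hF (hζ.pow_of_coprime i (Nat.coprime_of_lt_prime hi0.ne' hi7 Fact.out).symm)
    (hfixed v) (hfixed w) hne

/-- Triples `(i, v, w)` for which the element `v (1 - ζ ^ i) + w (1 - ζ ^ (-i))`, with
`ζ = seventhRoot β`, is the one listed at the same place in `stmt_10` for `u = 1`. -/
def lineRepresentatives : List (ℕ × ℕ × ℕ) :=
  [(3, 0, 3), (2, 0, 3), (3, 2, 1), (2, 4, 4), (2, 3, 0), (2, 2, 1), (2, 1, 2), (1, 1, 2),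
    (3, 4, 4), (1, 2, 1), (1, 3, 0), (1, 4, 4), (3, 1, 2), (1, 0, 3), (3, 3, 0), (1, 1, 4),
    (2, 4, 1), (3, 2, 3)]

/-- **Corollary (p = 5, r = 6).** Let `k ≥ 1` with `gcd(k, 6) = 1`, `n = 6k`,
`d = (5^{6k} - 1)/(5^k - 1) + 1`, and let `F` be the finite field with `5^n` elements.
Let `β ∈ F` satisfy `β⁶ + β + 2 = 0`, and let `u ∈ F_{5^k}` (fixed by `x ↦ x^{5^k}`),
`u ≠ 0`. Then `a⁻¹ x^d` is a complete permutation polynomial over `F` for each of the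
eighteen listed values of `a`. -/
theorem stmt_10 (k : ℕ) (hk : 0 < k) (hk6 : Nat.gcd k 6 = 1)
    (n : ℕ) (hn : n = 6 * k) (d : ℕ) (hd : d = (5 ^ (6 * k) - 1) / (5 ^ k - 1) + 1)
    (F : Type*) [Field F] [Fintype F] (hF : Fintype.card F = 5 ^ n)
    (β : F) (hβ : β ^ 6 + β + 2 = 0)
    (u : F) (hu : u ^ (5 ^ k) = u) (hu0 : u ≠ 0) :
    ∀ a : F,
      a ∈ ([vec6 β u 0 (-u) (3 * u) 0 (-(3 * u)),
            vec6 β u u 0 (-(2 * u)) (2 * u) 0,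
            vec6 β u u 0 (-u) u (2 * u),
            vec6 β u u u u u (2 * u),
            vec6 β u u (2 * u) (-u) 0 (-u),
            vec6 β u u (-(2 * u)) (2 * u) (-u) u,
            vec6 β u u (-u) 0 (3 * u) (3 * u),
            vec6 β u (2 * u) 0 u (3 * u) u,
            vec6 β u (2 * u) u 0 (2 * u) (2 * u),
            vec6 β u (2 * u) u (2 * u) u u,
            vec6 β u (2 * u) (2 * u) (-(2 * u)) (-u) u,
            vec6 β u (2 * u) (-(2 * u)) (-u) (2 * u) u,
            vec6 β u (-(2 * u)) (2 * u) u (-(2 * u)) (2 * u),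
            vec6 β u (2 * u) (-u) 0 0 u,
            vec6 β u (-u) (-(2 * u)) (2 * u) (-u) (2 * u),
            vec6 β 0 0 u u (-(2 * u)) 0,
            vec6 β 0 0 u (3 * u) (-u) (-(3 * u)),
            vec6 β 0 u u u u 0] : List F) →
      Function.Bijective (fun x : F => a⁻¹ * x ^ d) ∧
      Function.Bijective (fun x : F => a⁻¹ * x ^ d + x) := by
  subst hn hd
  rw [← Nat.card_eq_fintype_card] at hF
  have : Fact (Nat.Prime 5) := ⟨by norm_num⟩
  have : CharP F 5 := charP_of_card_eq_prime_pow (f := 6 * k) (by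
    rw [← Nat.card_eq_fintype_card, hF])
  let ζ := seventhRoot β
  intro a ha
  have hmap : a ∈ lineRepresentatives.map fun (i, v, w) =>
      u * (v * (1 - ζ ^ i) + w * (1 - ζ ^ (7 - i))) := by
    convert ha
    simp only [lineRepresentatives, List.map_cons, List.map_nil, List.cons.injEq, and_true, ζ,
      pow_one, seventhRoot_pow hβ, Nat.reduceSub]
    simp only [vec6, seventhRoot]
    push_cast
    and_intros
    all_goals linear_combination (norm := (ring_nf; reduce_mod_char!))
  obtain ⟨⟨i, v, w⟩, hivw, rfl⟩ := List.mem_map.mp hmap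
  have hbounds : ∀ t ∈ lineRepresentatives, 0 < t.1 ∧ t.1 < 7 ∧ ¬(5 ∣ t.2.1 ∧ 5 ∣ t.2.2) := by
    decide
  obtain ⟨hi0, hi7, hvw⟩ := hbounds _ hivw
  exact isCompletePermutation_seventhRoot hk6 hF hβ hu hu0 hi0 hi7 hvw
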